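/- Let u ∈ W and γ ∈ R^+ satisfy ℓ(us_γ) = ℓ(u) + 1 − ⟨2ρ, γ^∨⟩. Then for every 1 ≤ i ≤ n with ⟨χ_i, γ^∨⟩ ≠ 0, one has gr(γ^∨) + gr(us_γ) ≤ gr(u) + gr(s_i) in the lexicographic order on Z², where gr(s_1) = (1,0) and gr(s_i) = (0,1) for i ≠ 1. -/

import Mathlib

/-!
By the length hypothesis both sides have the same total degree, so only the first components
matter: `⟨α_1, γ^∨⟩ + [u s_γ α_1 < 0] ≤ [u α_1 < 0] + [i = 1]`.

Only the inversions of `s_γ` contribute to `⟨2ρ, γ^∨⟩`: each contributes at least `1`, and `γ`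
itself contributes `2`.  Therefore `ℓ(u) ≤ ℓ(u s_γ) + ℓ(s_γ) ≤ ℓ(u s_γ) + ⟨2ρ, γ^∨⟩ - 1`, and the
hypothesis makes both estimates equalities: every inversion of `s_γ` is an inversion of `u`, and
`⟨β, γ^∨⟩ = 1` for every inversion `β ≠ γ` of `s_γ`.  If `⟨α_1, γ^∨⟩ > 0`, then `α_1` and
`-s_γ α_1` are inversions of `s_γ`, hence of `u`, so that `u α_1 < 0 < u s_γ α_1`; moreover
`⟨α_1, γ^∨⟩ = 1` unless `γ = α_1`, which forces `i = 1`.  If `⟨α_1, γ^∨⟩ = 0`, then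
`u s_γ α_1 = u α_1`, and if it is negative there is nothing to prove.
-/

open scoped BigOperators

/-- A reduced crystallographic root system with a fixed base `α_1, …, α_n` of simple
roots, bundled with its Weyl group `W`.  A root `γ` is recorded by its integer
coordinate vector in the basis of simple roots (so the `i`-th simple root is
`Pi.single i 1`), and `cor γ` is the coordinate vector of the coroot `γ^∨` in the
basis of simple coroots (hence `cor γ i = ⟨χ_i, γ^∨⟩` for the fundamental weights
`χ_i`).  `A i j = ⟨α_i, α_j^∨⟩` is the Cartan matrix, `σ γ` is the reflection `s_γ`
and `act` is the action of the Weyl group on the root lattice. -/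
structure RootSystemData (n : ℕ) where
  A : Fin n → Fin n → ℤ
  R : Finset (Fin n → ℤ)
  cor : (Fin n → ℤ) → (Fin n → ℤ)
  W : Type
  [grp : Group W]
  σ : (Fin n → ℤ) → W
  act : W → (Fin n → ℤ) → (Fin n → ℤ)
  simple_mem : ∀ i : Fin n, (Pi.single i 1 : Fin n → ℤ) ∈ R
  root_ne_zero : ∀ γ ∈ R, γ ≠ 0
  neg_mem : ∀ γ ∈ R, -γ ∈ R
  pos_or_neg : ∀ γ ∈ R, (∀ i, 0 ≤ γ i) ∨ (∀ i, γ i ≤ 0)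
  reduced : ∀ γ ∈ R, ∀ k : ℤ, k • γ ∈ R → k = 1 ∨ k = -1
  cor_simple : ∀ i : Fin n, cor (Pi.single i 1) = Pi.single i 1
  cor_neg : ∀ γ ∈ R, cor (-γ) = -(cor γ)
  pair_self : ∀ γ ∈ R, (∑ i, ∑ j, γ i * A i j * cor γ j) = 2
  act_one : ∀ x, act 1 x = x
  act_mul : ∀ w w' x, act (w * w') x = act w (act w' x)
  act_refl : ∀ γ ∈ R, ∀ x, act (σ γ) x = x - (∑ i, ∑ j, x i * A i j * cor γ j) • γ
  act_mem : ∀ (w : W), ∀ γ ∈ R, act w γ ∈ R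
  cor_refl : ∀ γ ∈ R, ∀ β ∈ R,
    cor (act (σ γ) β) = cor β - (∑ i, ∑ j, γ i * A i j * cor β j) • cor γ
  refl_sq : ∀ γ ∈ R, σ γ * σ γ = 1
  refl_act : ∀ (w : W), ∀ γ ∈ R, σ (act w γ) = w * σ γ * w⁻¹
  act_faithful : ∀ w w' : W, (∀ γ ∈ R, act w γ = act w' γ) → w = w'
  generated : ∀ w : W, ∃ l : List (Fin n), w = (l.map fun i => σ (Pi.single i 1)).prod

namespace RootSystemData

instance {n : ℕ} (c : RootSystemData n) : Group c.W := c.grp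

/-- the pairing `⟨x, λ⟩` between an element `x` of the root lattice (coordinates in
the basis of simple roots) and an element `λ` of the coroot lattice (coordinates in
the basis of simple coroots) -/
def pair {n : ℕ} (c : RootSystemData n) (x lam : Fin n → ℤ) : ℤ :=
  ∑ i, ∑ j, x i * c.A i j * lam j

/-- the `i`-th simple root -/
def sroot {n : ℕ} (_c : RootSystemData n) (i : Fin n) : Fin n → ℤ := Pi.single i 1

/-- the simple reflection `s_i` -/
def s {n : ℕ} (c : RootSystemData n) (i : Fin n) : c.W := c.σ (c.sroot i)

/-- `s_{α_{t+1}}` for a `0`-based natural number index `t` (`= 1` when out of range) -/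
def sN {n : ℕ} (c : RootSystemData n) (t : ℕ) : c.W := if h : t < n then c.s ⟨t, h⟩ else 1

/-- `⟨2ρ, λ⟩ = Σ_{β ∈ R^+} ⟨β, λ⟩`, where `ρ` is the half-sum of the positive roots -/
def pairTwoRho {n : ℕ} (c : RootSystemData n) (lam : Fin n → ℤ) : ℤ :=
  ∑ β ∈ c.R, if ∀ i, 0 ≤ β i then c.pair β lam else 0

/-- the length of `w ∈ W` with respect to the simple reflections -/
noncomputable def len {n : ℕ} (c : RootSystemData n) (w : c.W) : ℕ :=
  sInf {k | ∃ l : List (Fin n), l.length = k ∧ (l.map c.s).prod = w}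

/-- the parabolic subgroup `W_S` generated by the simple reflections indexed by `S` -/
def Wsub {n : ℕ} (c : RootSystemData n) (S : Finset (Fin n)) : Subgroup c.W :=
  Subgroup.closure (c.s '' ↑S)

/-- `w ∈ W_T^S`: `w ∈ W_T` and `w` has minimal length in the coset `w W_S` -/
def MinRep {n : ℕ} (c : RootSystemData n) (T S : Finset (Fin n)) (w : c.W) : Prop :=
  w ∈ c.Wsub T ∧ ∀ u ∈ c.Wsub S, c.len w ≤ c.len (w * u)

/-- `w` is the longest element of `W_S` -/
def IsLongest {n : ℕ} (c : RootSystemData n) (S : Finset (Fin n)) (w : c.W) : Prop :=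
  w ∈ c.Wsub S ∧ ∀ v ∈ c.Wsub S, c.len v ≤ c.len w

end RootSystemData

/-- the support of `γ` is contained in `S`, i.e. `γ` lies in the span of
`{α_i : i ∈ S}` (for a root `γ`, membership in `R_S`) -/
def suppIn {n : ℕ} (S : Finset (Fin n)) (γ : Fin n → ℤ) : Prop :=
  ∀ i, i ∉ S → γ i = 0

/-- `Δ_j` for `0 ≤ j ≤ r+1`: the index set of the first `j` simple roots for `j ≤ r`,
and all of `Δ` for `j = r+1`.  (Indices of simple roots are `0`-based, so
`α_1, …, α_j` correspond to the indices `0, …, j-1`.) -/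
def deltaSet (n r j : ℕ) : Finset (Fin n) :=
  if j = r + 1 then Finset.univ else Finset.univ.filter fun i => (i : ℕ) < j

namespace RootSystemData

/-- `v 0, …, v r` (standing for `v_1, …, v_{r+1}`) is the decomposition of `w`
associated to `(Δ_P, Υ)`:  each `v_i ∈ W_{Δ_i}^{Δ_{i-1}}` and `w = v_{r+1} v_r ⋯ v_1`. -/
def IsDecomp {n : ℕ} (c : RootSystemData n) (r : ℕ) (w : c.W)
    (v : Fin (r + 1) → c.W) : Prop :=
  (∀ k : Fin (r + 1), c.MinRep (deltaSet n r ((k : ℕ) + 1)) (deltaSet n r (k : ℕ)) (v k)) ∧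
    w = (List.ofFn v).reverse.prod

/-- the first `m` simple roots `α_1, …, α_m` form a path of type `A_m`:
`⟨α_i, α_j^∨⟩ = -1` if `|i-j| = 1` and `⟨α_i, α_j^∨⟩ = 0` if `|i-j| ≥ 2`. -/
def PathA {n : ℕ} (c : RootSystemData n) (m : ℕ) : Prop :=
  ∀ i j : Fin n, (i : ℕ) < m → (j : ℕ) < m →
    (((i : ℕ) + 1 = (j : ℕ) ∨ (j : ℕ) + 1 = (i : ℕ)) → c.A i j = -1) ∧
    ((i : ℕ) + 2 ≤ (j : ℕ) ∨ (j : ℕ) + 2 ≤ (i : ℕ) → c.A i j = 0)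

/-- `u_{[k,m]} = s_k s_{k+1} ⋯ s_m` (`1`-based indices; `u_{[k,m]} = 1` for `k > m`) -/
def uu {n : ℕ} (c : RootSystemData n) (k m : ℕ) : c.W :=
  ((List.range' k (m + 1 - k)).map fun t => c.sN (t - 1)).prod

/-- `u_i^{(m)} = s_{m-i+1} s_{m-i+2} ⋯ s_m` -/
def uElt {n : ℕ} (c : RootSystemData n) (i m : ℕ) : c.W := c.uu (m - i + 1) m

end RootSystemData

/-- strict lexicographic order on `Fin m → ℤ` -/
def lexLT {m : ℕ} (x y : Fin m → ℤ) : Prop :=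
  ∃ j, x j < y j ∧ ∀ k, k < j → x k = y k

/-- lexicographic order on `Fin m → ℤ` -/
def lexLE {m : ℕ} (x y : Fin m → ℤ) : Prop := x = y ∨ lexLT x y

/-- the grading `gr(q_{α_{j+1}^∨}) ∈ ℤ^{r+1}` (for the `0`-based index `j < r`), when
`Δ_P` is of type `A_r`: in `1`-based terms, `gr(q_{α_1^∨}) = 2·e_1` and
`gr(q_{α_j^∨}) = (1-j)·e_{j-1} + (1+j)·e_j` for `2 ≤ j ≤ r`. -/
def grQ (r j : ℕ) : Fin (r + 1) → ℤ := fun k =>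
  (if (k : ℕ) = j then (j : ℤ) + 2 else 0) + (if (k : ℕ) + 1 = j then -(j : ℤ) else 0)

/-- the grading `gr(q_λ)` for `λ ∈ Q_P^∨` (coordinates in simple coroots), extended
additively from the `gr(q_{α_j^∨})`, when `Δ_P` is of type `A_r` -/
def grQlam (n r : ℕ) (lam : Fin n → ℤ) : Fin (r + 1) → ℤ :=
  fun k => ∑ j, lam j * grQ r (j : ℕ) k

namespace RootSystemData

variable {n : ℕ} {c : RootSystemData n}

section Action

lemma pair_neg (x l : Fin n → ℤ) : c.pair (-x) l = -c.pair x l := by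
  simp [pair, Finset.sum_neg_distrib]

lemma pair_sub (x y l : Fin n → ℤ) : c.pair (x - y) l = c.pair x l - c.pair y l := by
  simp [pair, sub_mul, Finset.sum_sub_distrib]

lemma pair_smul (k : ℤ) (x l : Fin n → ℤ) : c.pair (k • x) l = k * c.pair x l := by
  simp [pair, Finset.mul_sum, mul_assoc]

lemma pair_cor_self {γ : Fin n → ℤ} (hγ : γ ∈ c.R) : c.pair γ (c.cor γ) = 2 := c.pair_self γ hγ

lemma act_σ {γ : Fin n → ℤ} (hγ : γ ∈ c.R) (x : Fin n → ℤ) :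
    c.act (c.σ γ) x = x - c.pair x (c.cor γ) • γ := c.act_refl γ hγ x

lemma act_σ_self {γ : Fin n → ℤ} (hγ : γ ∈ c.R) : c.act (c.σ γ) γ = -γ := by
  rw [act_σ hγ, pair_cor_self hγ]
  module

lemma act_σ_act_σ {γ : Fin n → ℤ} (hγ : γ ∈ c.R) (x : Fin n → ℤ) :
    c.act (c.σ γ) (c.act (c.σ γ) x) = x := by
  rw [← c.act_mul, c.refl_sq γ hγ, c.act_one]

lemma pair_act_σ {γ : Fin n → ℤ} (hγ : γ ∈ c.R) (x : Fin n → ℤ) :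
    c.pair (c.act (c.σ γ) x) (c.cor γ) = -c.pair x (c.cor γ) := by
  rw [act_σ hγ, pair_sub, pair_smul, pair_cor_self hγ]
  ring

lemma act_inv_act (w : c.W) (x : Fin n → ℤ) : c.act w⁻¹ (c.act w x) = x := by
  rw [← c.act_mul, inv_mul_cancel, c.act_one]

lemma act_act_inv (w : c.W) (x : Fin n → ℤ) : c.act w (c.act w⁻¹ x) = x := by
  rw [← c.act_mul, mul_inv_cancel, c.act_one]

lemma sroot_mem (i : Fin n) : c.sroot i ∈ c.R := c.simple_mem i

lemma cor_sroot_eq_zero {i k : Fin n} (hik : i ≠ k) : c.cor (c.sroot k) i = 0 := by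
  rw [sroot, c.cor_simple, Pi.single_eq_of_ne hik]

lemma s_mul_s (i : Fin n) : c.s i * c.s i = 1 := c.refl_sq _ (sroot_mem i)

lemma mul_s_mul_s (w : c.W) (i : Fin n) : w * c.s i * c.s i = w := by
  rw [mul_assoc, s_mul_s, mul_one]

lemma s_inv (i : Fin n) : (c.s i)⁻¹ = c.s i := inv_eq_of_mul_eq_one_left (s_mul_s i)

lemma exists_word (w : c.W) : ∃ l : List (Fin n), (l.map c.s).prod = w :=
  (c.generated w).imp fun _ h => h.symm

lemma mul_s_induction {p : c.W → Prop} (one : p 1) (mul_s : ∀ w i, p w → p (w * c.s i))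
    (w : c.W) : p w := by
  obtain ⟨l, rfl⟩ := exists_word w
  induction l using List.reverseRecOn with
  | nil => exact one
  | append_singleton l i ih => simpa using mul_s _ i ih

lemma act_neg (w : c.W) (x : Fin n → ℤ) : c.act w (-x) = -c.act w x := by
  induction w using mul_s_induction generalizing x with
  | one => simp only [c.act_one]
  | mul_s w i ih =>
    have act_s_neg : c.act (c.s i) (-x) = -c.act (c.s i) x := by
      rw [s, act_σ (sroot_mem i), act_σ (sroot_mem i), pair_neg]
      module
    rw [c.act_mul, c.act_mul, act_s_neg, ih]

end Action

section PositiveRoots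

variable (c) in
/-- The set `R^+` of positive roots. -/
def posRoots : Finset (Fin n → ℤ) := c.R.filter fun β => ∀ i, 0 ≤ β i

lemma mem_posRoots {β : Fin n → ℤ} : β ∈ c.posRoots ↔ β ∈ c.R ∧ ∀ i, 0 ≤ β i :=
  Finset.mem_filter

lemma mem_R_of_mem_posRoots {β : Fin n → ℤ} (hβ : β ∈ c.posRoots) : β ∈ c.R :=
  (mem_posRoots.1 hβ).1

lemma neg_mem_posRoots_iff {β : Fin n → ℤ} (hβ : β ∈ c.R) : -β ∈ c.posRoots ↔ β ∉ c.posRoots := by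
  simp only [mem_posRoots, hβ, c.neg_mem β hβ, true_and, Pi.neg_apply, Left.nonneg_neg_iff]
  refine ⟨fun hneg hpos => c.root_ne_zero β hβ ?_, (c.pos_or_neg β hβ).resolve_left⟩
  exact funext fun i => le_antisymm (hneg i) (hpos i)

lemma mem_posRoots_of_apply_pos {β : Fin n → ℤ} (hβ : β ∈ c.R) {j : Fin n} (hj : 0 < β j) :
    β ∈ c.posRoots :=
  mem_posRoots.2 ⟨hβ, (c.pos_or_neg β hβ).resolve_right fun hneg => (hneg j).not_gt hj⟩

lemma sroot_mem_posRoots (i : Fin n) : c.sroot i ∈ c.posRoots :=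
  mem_posRoots_of_apply_pos (sroot_mem i) (j := i) (by simp [sroot])

lemma exists_ne_apply_pos {β : Fin n → ℤ} (hβ : β ∈ c.posRoots) {i : Fin n}
    (hne : β ≠ c.sroot i) : ∃ j, j ≠ i ∧ 0 < β j := by
  obtain ⟨hβR, hβ0⟩ := mem_posRoots.1 hβ
  by_contra! hle
  have hβ_smul : β = β i • c.sroot i := by
    funext j
    rcases eq_or_ne j i with rfl | hj
    · simp [sroot]
    · simpa [sroot, hj] using le_antisymm (hle j hj) (hβ0 j)
  rcases c.reduced _ (sroot_mem i) (β i) (hβ_smul ▸ hβR) with h1 | h1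
  · exact hne (by rw [hβ_smul, h1, one_smul])
  · linarith [hβ0 i]

lemma pairTwoRho_eq_sum (l : Fin n → ℤ) : c.pairTwoRho l = ∑ β ∈ c.posRoots, c.pair β l :=
  (Finset.sum_filter _ _).symm

end PositiveRoots

section Inversions

/-- The inversion set of `w`: the positive roots `β` for which `w β` is negative. -/
def inversions (w : c.W) : Finset (Fin n → ℤ) :=
  c.posRoots.filter fun β => c.act w β ∉ c.posRoots

lemma mem_inversions {w : c.W} {β : Fin n → ℤ} :
    β ∈ inversions w ↔ β ∈ c.posRoots ∧ c.act w β ∉ c.posRoots :=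
  Finset.mem_filter

lemma inversions_subset_posRoots (w : c.W) : inversions w ⊆ c.posRoots :=
  Finset.filter_subset _ _

lemma inversions_one : inversions (1 : c.W) = ∅ := by
  simp [inversions, c.act_one]

lemma sroot_mem_inversions {w : c.W} {i : Fin n} :
    c.sroot i ∈ inversions w ↔ c.act w (c.sroot i) ∉ c.posRoots := by
  simp only [mem_inversions, sroot_mem_posRoots, true_and]

lemma self_mem_inversions_σ {γ : Fin n → ℤ} (hγ : γ ∈ c.posRoots) : γ ∈ inversions (c.σ γ) := by
  have hγR := mem_R_of_mem_posRoots hγ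
  rw [mem_inversions, act_σ_self hγR, neg_mem_posRoots_iff hγR, not_not]
  exact ⟨hγ, hγ⟩

lemma inversions_s (i : Fin n) : inversions (c.s i) = {c.sroot i} := by
  ext β
  rw [Finset.mem_singleton]
  refine ⟨fun hβ => ?_, ?_⟩
  · obtain ⟨hpos, hneg⟩ := mem_inversions.1 hβ
    by_contra hne
    -- `s_i` changes only the `i`-th coordinate, so a positive `j`-th coordinate survives
    obtain ⟨j, hji, hj⟩ := exists_ne_apply_pos hpos hne
    refine hneg (mem_posRoots_of_apply_pos (c.act_mem _ _ (mem_R_of_mem_posRoots hpos)) (j := j) ?_)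
    rw [s, act_σ (sroot_mem i)]
    simpa [sroot, hji] using hj
  · rintro rfl
    exact self_mem_inversions_σ (sroot_mem_posRoots i)

lemma sroot_mem_inversions_mul_s {w : c.W} {i : Fin n} :
    c.sroot i ∈ inversions (w * c.s i) ↔ c.sroot i ∉ inversions w := by
  rw [sroot_mem_inversions, sroot_mem_inversions, c.act_mul, s, act_σ_self (sroot_mem i), act_neg,
    neg_mem_posRoots_iff (c.act_mem _ _ (sroot_mem i))]

lemma card_inversions_mul_sdiff (x y : c.W) :
    (inversions (x * y) \ inversions y).card = (inversions x \ inversions y⁻¹).card := by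
  refine Finset.card_nbij' (c.act y) (c.act y⁻¹) ?_ ?_ (fun β _ => act_inv_act y β)
    (fun β _ => act_act_inv y β)
  · intro β hβ
    simp_all [mem_inversions, c.act_mul, act_inv_act]
  · intro β hβ
    simp_all [mem_inversions, c.act_mul, act_act_inv]

lemma card_inversions_mul_sdiff_le (x y : c.W) :
    (inversions (x * y) \ inversions y).card ≤ (inversions x).card :=
  (card_inversions_mul_sdiff x y).trans_le (Finset.card_le_card Finset.sdiff_subset)

lemma card_inversions_mul_s_add_one {w : c.W} {i : Fin n} (hi : c.sroot i ∈ inversions w) :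
    (inversions (w * c.s i)).card + 1 = (inversions w).card := by
  have hi' : c.sroot i ∉ inversions (w * c.s i) := fun h => sroot_mem_inversions_mul_s.1 h hi
  have hcard := card_inversions_mul_sdiff w (c.s i)
  rw [s_inv, inversions_s, Finset.sdiff_singleton_eq_erase, Finset.sdiff_singleton_eq_erase,
    Finset.erase_eq_of_notMem hi'] at hcard
  rw [hcard, Finset.card_erase_add_one hi]

end Inversions

section Length

lemma len_le_length (l : List (Fin n)) : c.len (l.map c.s).prod ≤ l.length :=
  Nat.sInf_le ⟨l, rfl, rfl⟩

lemma exists_reduced_word (w : c.W) :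
    ∃ l : List (Fin n), l.length = c.len w ∧ (l.map c.s).prod = w :=
  Nat.sInf_mem (s := {k | ∃ l : List (Fin n), l.length = k ∧ (l.map c.s).prod = w})
    ((exists_word w).elim fun l hl => ⟨l.length, l, rfl, hl⟩)

lemma len_one : c.len (1 : c.W) = 0 := Nat.le_zero.1 (len_le_length [])

lemma len_mul_s_le (w : c.W) (i : Fin n) : c.len (w * c.s i) ≤ c.len w + 1 := by
  obtain ⟨l, hlen, rfl⟩ := exists_reduced_word w
  simpa [← hlen] using len_le_length (c := c) (l ++ [i])

lemma exists_eraseIdx_prod_eq_mul_s (i : Fin n) (l : List (Fin n))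
    (hi : c.sroot i ∈ inversions (l.map c.s).prod) :
    ∃ j < l.length, ((l.eraseIdx j).map c.s).prod = (l.map c.s).prod * c.s i := by
  induction l with
  | nil => simp [inversions_one] at hi
  | cons a t ih =>
    set w := (t.map c.s).prod with hw
    by_cases hit : c.sroot i ∈ inversions w
    · obtain ⟨j, hj, hprod⟩ := ih hit
      exact ⟨j + 1, by simpa using hj, by simp [hprod, hw, mul_assoc]⟩
    · -- the letter `a` makes the positive root `w α_i` negative, so this root is `α_a`
      have hpos : c.act w (c.sroot i) ∈ c.posRoots := not_not.1 (sroot_mem_inversions.not.1 hit)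
      have hroot : c.act w (c.sroot i) = c.sroot a := by
        rw [← Finset.mem_singleton, ← inversions_s, mem_inversions, ← c.act_mul]
        exact ⟨hpos, by simpa [sroot_mem_inversions] using hi⟩
      have hconj : c.s a = w * c.s i * w⁻¹ := by
        rw [s, ← hroot, c.refl_act _ _ (sroot_mem i), ← s]
      exact ⟨0, by simp, by simp [← hw, hconj, mul_assoc, s_mul_s]⟩

lemma len_mul_s_lt {w : c.W} {i : Fin n} (hi : c.sroot i ∈ inversions w) :
    c.len (w * c.s i) < c.len w := by
  obtain ⟨l, hlen, rfl⟩ := exists_reduced_word w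
  obtain ⟨j, hj, hprod⟩ := exists_eraseIdx_prod_eq_mul_s i l hi
  have hle := len_le_length (c := c) (l.eraseIdx j)
  have := List.length_eraseIdx_add_one hj
  rw [hprod] at hle
  omega

lemma len_mul_s_add_one {w : c.W} {i : Fin n} (hi : c.sroot i ∈ inversions w) :
    c.len (w * c.s i) + 1 = c.len w := by
  have hle := len_mul_s_le (w * c.s i) i
  rw [mul_s_mul_s] at hle
  exact le_antisymm (len_mul_s_lt hi) hle

lemma len_mul_s {w : c.W} {i : Fin n} (hi : c.sroot i ∉ inversions w) :
    c.len (w * c.s i) = c.len w + 1 := by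
  rw [← len_mul_s_add_one (sroot_mem_inversions_mul_s.2 hi), mul_s_mul_s]

lemma len_s (i : Fin n) : c.len (c.s i) = 1 := by
  simpa [len_one] using len_mul_s (w := (1 : c.W)) (i := i) (by simp [inversions_one])

lemma card_inversions (w : c.W) : (inversions w).card = c.len w := by
  induction w using mul_s_induction with
  | one => rw [inversions_one, len_one, Finset.card_empty]
  | mul_s w i ih =>
    by_cases hi : c.sroot i ∈ inversions w
    · have := card_inversions_mul_s_add_one hi
      have := len_mul_s_add_one hi
      omega
    · have hcard := card_inversions_mul_s_add_one (sroot_mem_inversions_mul_s.2 hi)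
      rw [mul_s_mul_s] at hcard
      rw [len_mul_s hi, ← ih, hcard]

lemma len_mul_le (x y : c.W) : c.len (x * y) ≤ c.len x + c.len y := by
  simp only [← card_inversions]
  have := Finset.card_le_card_sdiff_add_card (s := inversions (x * y)) (t := inversions y)
  have := card_inversions_mul_sdiff_le x y
  omega

lemma inversions_subset_of_len_mul {x y : c.W} (h : c.len (x * y) = c.len x + c.len y) :
    inversions y ⊆ inversions (x * y) := by
  simp only [← card_inversions] at h
  have hsplit := Finset.card_sdiff_add_card_inter (inversions (x * y)) (inversions y)
  have hle := card_inversions_mul_sdiff_le x y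
  rw [← Finset.inter_eq_right]
  exact Finset.eq_of_subset_of_card_le Finset.inter_subset_right (by omega)

end Length

section Reflections

variable {γ : Fin n → ℤ}

lemma neg_act_σ_mem_inversions_σ (hγ : γ ∈ c.R) {β : Fin n → ℤ} (hβ : β ∈ inversions (c.σ γ)) :
    -c.act (c.σ γ) β ∈ inversions (c.σ γ) := by
  obtain ⟨hpos, hneg⟩ := mem_inversions.1 hβ
  have hβR := mem_R_of_mem_posRoots hpos
  rw [mem_inversions, act_neg, act_σ_act_σ hγ, neg_mem_posRoots_iff (c.act_mem _ _ hβR),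
    neg_mem_posRoots_iff hβR, not_not]
  exact ⟨hneg, hpos⟩

lemma notMem_inversions_mul_σ {u : c.W} (hγ : γ ∈ c.R) (hsub : inversions (c.σ γ) ⊆ inversions u)
    {β : Fin n → ℤ} (hβ : β ∈ inversions (c.σ γ)) : β ∉ inversions (u * c.σ γ) := by
  have hβR := mem_R_of_mem_posRoots (mem_inversions.1 hβ).1
  have hneg := (mem_inversions.1 (hsub (neg_act_σ_mem_inversions_σ hγ hβ))).2
  rw [act_neg, ← c.act_mul, neg_mem_posRoots_iff (c.act_mem _ _ hβR), not_not] at hneg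
  exact fun hβ' => (mem_inversions.1 hβ').2 hneg

lemma pair_pos_of_mem_inversions_σ (hγ : γ ∈ c.posRoots) {β : Fin n → ℤ}
    (hβ : β ∈ inversions (c.σ γ)) : 0 < c.pair β (c.cor γ) := by
  obtain ⟨hγR, hγ0⟩ := mem_posRoots.1 hγ
  obtain ⟨hpos, hneg⟩ := mem_inversions.1 hβ
  obtain ⟨hβR, hβ0⟩ := mem_posRoots.1 hpos
  by_contra! hle
  refine hneg (mem_posRoots.2 ⟨c.act_mem _ _ hβR, fun i => ?_⟩)
  rw [act_σ hγR, Pi.sub_apply, Pi.smul_apply, smul_eq_mul]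
  linarith [hβ0 i, mul_nonpos_of_nonpos_of_nonneg hle (hγ0 i)]

lemma sroot_mem_inversions_σ (hγ : γ ∈ c.posRoots) {k : Fin n}
    (hk : 0 < c.pair (c.sroot k) (c.cor γ)) : c.sroot k ∈ inversions (c.σ γ) := by
  rcases eq_or_ne γ (c.sroot k) with rfl | hne
  · exact self_mem_inversions_σ hγ
  obtain ⟨j, hjk, hj⟩ := exists_ne_apply_pos hγ hne
  have hj0 : c.sroot k j = 0 := Pi.single_eq_of_ne hjk _
  rw [sroot_mem_inversions, ← neg_mem_posRoots_iff (c.act_mem _ _ (sroot_mem k))]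
  refine mem_posRoots_of_apply_pos (c.neg_mem _ (c.act_mem _ _ (sroot_mem k))) (j := j) ?_
  rw [act_σ (mem_R_of_mem_posRoots hγ)]
  simpa [hj0] using mul_pos hk hj

lemma sum_pair_posRoots_sdiff_inversions_σ (hγ : γ ∈ c.R) :
    ∑ β ∈ c.posRoots \ inversions (c.σ γ), c.pair β (c.cor γ) = 0 := by
  refine Finset.sum_involution (fun β _ => c.act (c.σ γ) β) ?_ ?_ ?_ (fun β _ => act_σ_act_σ hγ β)
  · intro β _
    rw [pair_act_σ hγ, add_neg_cancel]
  · intro β _ hne hfix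
    have hneg := pair_act_σ hγ β
    rw [hfix] at hneg
    omega
  · intro β hβ
    simp_all [mem_inversions, act_σ_act_σ hγ]

lemma pairTwoRho_cor_eq_sum_inversions (hγ : γ ∈ c.R) :
    c.pairTwoRho (c.cor γ) = ∑ β ∈ inversions (c.σ γ), c.pair β (c.cor γ) := by
  rw [pairTwoRho_eq_sum, ← Finset.sum_sdiff (inversions_subset_posRoots (c.σ γ)),
    sum_pair_posRoots_sdiff_inversions_σ hγ, zero_add]

lemma le_pair_of_mem_inversions_σ (hγ : γ ∈ c.posRoots) {β : Fin n → ℤ}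
    (hβ : β ∈ inversions (c.σ γ)) : (if β = γ then 2 else 1) ≤ c.pair β (c.cor γ) := by
  split_ifs with h
  · rw [h, pair_cor_self (mem_R_of_mem_posRoots hγ)]
  · exact pair_pos_of_mem_inversions_σ hγ hβ

lemma sum_inversions_σ_ite (hγ : γ ∈ c.posRoots) :
    ∑ β ∈ inversions (c.σ γ), (if β = γ then 2 else 1 : ℤ) = c.len (c.σ γ) + 1 := by
  have hite : ∀ β, (if β = γ then 2 else 1 : ℤ) = 1 + if β = γ then 1 else 0 := by
    intro β
    split_ifs <;> rfl
  simp [hite, Finset.sum_add_distrib, self_mem_inversions_σ hγ, card_inversions]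

lemma len_σ_add_one_le_pairTwoRho (hγ : γ ∈ c.posRoots) :
    (c.len (c.σ γ) : ℤ) + 1 ≤ c.pairTwoRho (c.cor γ) := by
  rw [← sum_inversions_σ_ite hγ, pairTwoRho_cor_eq_sum_inversions (mem_R_of_mem_posRoots hγ)]
  exact Finset.sum_le_sum fun β => le_pair_of_mem_inversions_σ hγ

lemma pair_eq_ite_of_pairTwoRho_eq (hγ : γ ∈ c.posRoots)
    (hρ : c.pairTwoRho (c.cor γ) = c.len (c.σ γ) + 1) {β : Fin n → ℤ}
    (hβ : β ∈ inversions (c.σ γ)) : c.pair β (c.cor γ) = if β = γ then 2 else 1 := by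
  rw [← sum_inversions_σ_ite hγ, pairTwoRho_cor_eq_sum_inversions (mem_R_of_mem_posRoots hγ)] at hρ
  exact ((Finset.sum_eq_sum_iff_of_le fun β => le_pair_of_mem_inversions_σ hγ).1 hρ.symm β hβ).symm

lemma len_and_pairTwoRho_eq_of_len_mul_σ {u : c.W} (hγ : γ ∈ c.posRoots)
    (hlen : (c.len (u * c.σ γ) : ℤ) = c.len u + 1 - c.pairTwoRho (c.cor γ)) :
    c.len u = c.len (u * c.σ γ) + c.len (c.σ γ) ∧
      c.pairTwoRho (c.cor γ) = c.len (c.σ γ) + 1 := by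
  have hsub := len_mul_le (u * c.σ γ) (c.σ γ)
  rw [mul_assoc, c.refl_sq γ (mem_R_of_mem_posRoots hγ), mul_one] at hsub
  have hρ := len_σ_add_one_le_pairTwoRho hγ
  constructor <;> omega

lemma inversions_σ_subset_of_len_mul_σ {u : c.W} (hγ : γ ∈ c.R)
    (hlen : c.len u = c.len (u * c.σ γ) + c.len (c.σ γ)) :
    inversions (c.σ γ) ⊆ inversions u := by
  have hu : u * c.σ γ * c.σ γ = u := by rw [mul_assoc, c.refl_sq γ hγ, mul_one]
  rw [← hu]
  exact inversions_subset_of_len_mul (by rwa [hu])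

lemma pair_sroot_add_descent_le {u : c.W} (hγ : γ ∈ c.posRoots)
    (hlen : (c.len (u * c.σ γ) : ℤ) = c.len u + 1 - c.pairTwoRho (c.cor γ))
    {i : Fin n} (hi : c.cor γ i ≠ 0) (k : Fin n) :
    c.pair (c.sroot k) (c.cor γ) + (if c.sroot k ∈ inversions (u * c.σ γ) then 1 else 0) ≤
      (if c.sroot k ∈ inversions u then 1 else 0) + if i = k then 1 else 0 := by
  have hγR := mem_R_of_mem_posRoots hγ
  obtain ⟨hlen_add, hρ⟩ := len_and_pairTwoRho_eq_of_len_mul_σ hγ hlen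
  have hsub := inversions_σ_subset_of_len_mul_σ hγR hlen_add
  rcases lt_trichotomy (c.pair (c.sroot k) (c.cor γ)) 0 with hneg | hzero | hpos
  · split_ifs <;> omega
  · have hdesc : c.sroot k ∈ inversions (u * c.σ γ) ↔ c.sroot k ∈ inversions u := by
      rw [sroot_mem_inversions, sroot_mem_inversions, c.act_mul, act_σ hγR, hzero, zero_smul,
        sub_zero]
    simp only [hzero, hdesc]
    split_ifs <;> omega
  · have hk := sroot_mem_inversions_σ hγ hpos
    have hik : c.sroot k = γ → i = k := by
      rintro rfl
      exact not_imp_comm.1 cor_sroot_eq_zero hi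
    rw [if_pos (hsub hk), if_neg (notMem_inversions_mul_σ hγR hsub hk),
      pair_eq_ite_of_pairTwoRho_eq hγ hρ hk]
    by_cases hkγ : c.sroot k = γ
    · rw [if_pos hkγ, if_pos (hik hkγ), add_zero, one_add_one_eq_two]
    · rw [if_neg hkγ]
      split_ifs <;> omega

end Reflections

section Parabolic

lemma s_mem_Wsub {S : Finset (Fin n)} {k : Fin n} (hk : k ∈ S) : c.s k ∈ c.Wsub S :=
  Subgroup.subset_closure ⟨k, hk, rfl⟩

lemma eq_one_or_eq_s_of_mem_Wsub_singleton {k : Fin n} {x : c.W} (hx : x ∈ c.Wsub {k}) :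
    x = 1 ∨ x = c.s k := by
  rw [Wsub, Finset.coe_singleton, Set.image_singleton] at hx
  induction hx using Subgroup.closure_induction with
  | mem x hx => exact Or.inr hx
  | one => exact Or.inl rfl
  | mul x y _ _ hx hy => rcases hx with rfl | rfl <;> rcases hy with rfl | rfl <;> simp [s_mul_s]
  | inv x _ hx => rcases hx with rfl | rfl <;> simp [s_inv]

lemma MinRep.sroot_notMem_inversions {T S : Finset (Fin n)} {w : c.W} (hw : c.MinRep T S w)
    {k : Fin n} (hk : k ∈ S) : c.sroot k ∉ inversions w :=
  fun hdesc => (len_mul_s_lt hdesc).not_ge (hw.2 _ (s_mem_Wsub hk))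

lemma len_mul_of_mem_Wsub_singleton {k : Fin n} {w x : c.W} (hw : c.sroot k ∉ inversions w)
    (hx : x ∈ c.Wsub {k}) : c.len (w * x) = c.len w + c.len x := by
  rcases eq_one_or_eq_s_of_mem_Wsub_singleton hx with rfl | rfl
  · rw [mul_one, len_one, add_zero]
  · rw [len_mul_s hw, len_s]

lemma len_eq_ite_of_mem_Wsub_singleton {k : Fin n} {w x : c.W} (hw : c.sroot k ∉ inversions w)
    (hx : x ∈ c.Wsub {k}) : c.len x = if c.sroot k ∈ inversions (w * x) then 1 else 0 := by
  rcases eq_one_or_eq_s_of_mem_Wsub_singleton hx with rfl | rfl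
  · rw [mul_one, if_neg hw, len_one]
  · rw [if_pos (sroot_mem_inversions_mul_s.2 hw), len_s]

lemma deltaSet_one_one (hn : 0 < n) : deltaSet n 1 1 = {⟨0, hn⟩} := by
  ext i
  simp [deltaSet, Fin.ext_iff]

section Decomposition

variable {w : c.W} {v : Fin 2 → c.W}

lemma IsDecomp.eq_mul (h : c.IsDecomp 1 w v) : w = v 1 * v 0 := by
  simpa using h.2

lemma IsDecomp.mem_Wsub (h : c.IsDecomp 1 w v) (hn : 0 < n) : v 0 ∈ c.Wsub {⟨0, hn⟩} := by
  rw [← deltaSet_one_one hn]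
  exact (h.1 0).1

lemma IsDecomp.sroot_notMem_inversions (h : c.IsDecomp 1 w v) (hn : 0 < n) :
    c.sroot ⟨0, hn⟩ ∉ inversions (v 1) :=
  (h.1 1).sroot_notMem_inversions (by simp [deltaSet])

lemma IsDecomp.len_eq_add (h : c.IsDecomp 1 w v) (hn : 0 < n) :
    c.len w = c.len (v 1) + c.len (v 0) := by
  rw [h.eq_mul]
  exact len_mul_of_mem_Wsub_singleton (h.sroot_notMem_inversions hn) (h.mem_Wsub hn)

lemma IsDecomp.len_zero_eq_ite (h : c.IsDecomp 1 w v) (hn : 0 < n) :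
    c.len (v 0) = if c.sroot ⟨0, hn⟩ ∈ inversions w then 1 else 0 := by
  rw [h.eq_mul]
  exact len_eq_ite_of_mem_Wsub_singleton (h.sroot_notMem_inversions hn) (h.mem_Wsub hn)

end Decomposition

end Parabolic

end RootSystemData

lemma lexLE_of_add_eq_add {x y : Fin 2 → ℤ} (hsum : x 0 + x 1 = y 0 + y 1) (h0 : x 0 ≤ y 0) :
    lexLE x y := by
  rcases h0.lt_or_eq with hlt | heq
  · exact Or.inr ⟨0, hlt, fun k hk => absurd hk (Fin.not_lt_zero k)⟩
  · refine Or.inl (funext (Fin.forall_fin_two.2 ⟨heq, ?_⟩))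
    rw [heq] at hsum
    exact add_left_cancel hsum

/-- **Key Lemma, part (b), for `Δ_P = {α_1}` (`r = 1`).**  Let `u ∈ W` and
`γ ∈ R^+` satisfy `ℓ(u s_γ) = ℓ(u) + 1 - ⟨2ρ, γ^∨⟩`.  Then for every `i` with
`⟨χ_i, γ^∨⟩ ≠ 0`, `gr(γ^∨) + gr(u s_γ) ≤ gr(u) + gr(s_i)` in the lexicographic
order on `ℤ²`, where `gr(λ) = (⟨α_1, λ⟩, ⟨2ρ - α_1, λ⟩)`, `gr(s_1) = (1,0)` and
`gr(s_i) = (0,1)` for `i ≠ 1`. -/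
theorem key_lemma_b_rank_one {n : ℕ} (c : RootSystemData n) (hn : 1 < n)
    (u : c.W) (γ : Fin n → ℤ) (hγR : γ ∈ c.R) (hγpos : ∀ i, 0 ≤ γ i)
    (hlen : (c.len (u * c.σ γ) : ℤ) = (c.len u : ℤ) + 1 - c.pairTwoRho (c.cor γ))
    (i : Fin n) (hi : c.cor γ i ≠ 0)
    (v v' : Fin 2 → c.W)
    (hv : c.IsDecomp 1 u v) (hv' : c.IsDecomp 1 (u * c.σ γ) v') :
    lexLE
      (fun k : Fin 2 =>
        (if (k : ℕ) = 0 then c.pair (c.sroot ⟨0, by omega⟩) (c.cor γ)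
          else c.pairTwoRho (c.cor γ) - c.pair (c.sroot ⟨0, by omega⟩) (c.cor γ)) +
          (c.len (v' k) : ℤ))
      (fun k : Fin 2 =>
        (c.len (v k) : ℤ) +
          (if (i : ℕ) = 0 then (if (k : ℕ) = 0 then 1 else 0)
            else (if (k : ℕ) = 1 then 1 else 0))) := by
  have hγ : γ ∈ c.posRoots := RootSystemData.mem_posRoots.2 ⟨hγR, hγpos⟩
  have hn0 : 0 < n := by omega
  have hfirst := RootSystemData.pair_sroot_add_descent_le hγ hlen hi ⟨0, hn0⟩
  have hu := hv.len_eq_add hn0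
  have hu' := hv'.len_eq_add hn0
  have hv0 := hv.len_zero_eq_ite hn0
  have hv0' := hv'.len_zero_eq_ite hn0
  refine lexLE_of_add_eq_add ?_ ?_
  · simp only [Fin.val_zero, Fin.val_one, if_true, one_ne_zero, zero_ne_one, if_false]
    split_ifs <;> omega
  · simpa [hv0, hv0', Fin.ext_iff] using hfirst
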